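/- Let r ≥ 2 and let A, U, B, V, X be r×r complex matrices such that rows 3 through r of B·A coincide with rows 3 through r of X·B, and rows 3 through r of B·U coincide with rows 3 through r of X·V − V·X. Then for every ω ∈ ℂ with I − ωA invertible, rows 3 through r of the matrix (I − ωX)·M(ω) coincide with rows 3 through r of V·(I − ωX), where M(ω) = V + ω B (I − ωA)⁻¹ U. -/

import Mathlib

open Matrix

/-!
A left vector `w` with `w B A = w X B` satisfies `w (1 - ωX) B = w B (1 - ωA)`, hence
`w (1 - ωX) B (1 - ωA)⁻¹ = w B`: multiplying by `1 - ωX` clears the resolvent in the stability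
matrix, so that `w (1 - ωX) M(ω) = w (V - ω(XV - BU))`. If also `w B U = w (XV - VX)`, the right
side is `w V (1 - ωX)`. The theorem is the case where `w` is a coordinate row vector.
-/

theorem single_one_vecMul_eq_iff {R m n : Type*} [NonAssocSemiring R] [Fintype m] [DecidableEq m]
    {M N : Matrix m n R} {i : m} :
    Pi.single i 1 ᵥ* M = Pi.single i 1 ᵥ* N ↔ ∀ j, M i j = N i j := by
  simp only [single_one_vecMul, funext_iff, row_apply]

section GeneralLinearMethod

variable {R m n : Type*} [CommRing R] [Fintype m] [Fintype n] [DecidableEq m] [DecidableEq n]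
  {A : Matrix n n R} {U : Matrix n m R} {B : Matrix m n R} {V X : Matrix m m R}
  {w : m → R} {ω : R}

/-- The stability matrix `M(ω) = V + ω B (1 - ωA)⁻¹ U` of the general linear method with
coefficients `A`, `U`, `B`, `V`, where `A` acts on the stages (indexed by `n`) and `V` on the
external approximations (indexed by `m`). It is meaningful only when `1 - ωA` is invertible,
as `⁻¹` of a singular matrix is `0`. -/
noncomputable def stabilityMatrix (A : Matrix n n R) (U : Matrix n m R) (B : Matrix m n R)
    (V : Matrix m m R) (ω : R) : Matrix m m R :=
  V + ω • (B * (1 - ω • A)⁻¹ * U)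

theorem vecMul_one_sub_smul_mul (h : w ᵥ* (B * A) = w ᵥ* (X * B)) (ω : R) :
    w ᵥ* ((1 - ω • X) * B) = w ᵥ* (B * (1 - ω • A)) := by
  simp only [Matrix.sub_mul, Matrix.mul_sub, Matrix.one_mul, Matrix.mul_one, Matrix.smul_mul,
    Matrix.mul_smul, vecMul_sub, vecMul_smul, h]

theorem vecMul_one_sub_smul_mul_mul_inv (h : w ᵥ* (B * A) = w ᵥ* (X * B))
    (hA : IsUnit (1 - ω • A)) :
    w ᵥ* ((1 - ω • X) * B * (1 - ω • A)⁻¹) = w ᵥ* B := by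
  rw [← vecMul_vecMul, vecMul_one_sub_smul_mul h, vecMul_vecMul,
    mul_nonsing_inv_cancel_right _ _ ((isUnit_iff_isUnit_det _).mp hA)]

theorem vecMul_one_sub_smul_mul_stabilityMatrix (h : w ᵥ* (B * A) = w ᵥ* (X * B))
    (hA : IsUnit (1 - ω • A)) :
    w ᵥ* ((1 - ω • X) * stabilityMatrix A U B V ω) =
      w ᵥ* ((1 - ω • X) * V) + ω • w ᵥ* (B * U) := by
  rw [stabilityMatrix, Matrix.mul_add, Matrix.mul_smul, ← Matrix.mul_assoc, ← Matrix.mul_assoc,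
    vecMul_add, vecMul_smul, ← vecMul_vecMul w _ U, vecMul_one_sub_smul_mul_mul_inv h hA,
    vecMul_vecMul]

theorem stmt_2_general (hBA : w ᵥ* (B * A) = w ᵥ* (X * B))
    (hBU : w ᵥ* (B * U) = w ᵥ* (X * V - V * X)) (hA : IsUnit (1 - ω • A)) :
    w ᵥ* ((1 - ω • X) * stabilityMatrix A U B V ω) = w ᵥ* (V * (1 - ω • X)) := by
  have commutator_correction : (1 - ω • X) * V + ω • (X * V - V * X) = V * (1 - ω • X) := by
    rw [Matrix.sub_mul, Matrix.mul_sub, Matrix.one_mul, Matrix.mul_one, Matrix.smul_mul,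
      Matrix.mul_smul, smul_sub, sub_add_sub_cancel]
  rw [vecMul_one_sub_smul_mul_stabilityMatrix hBA hA, hBU, ← vecMul_smul, ← vecMul_add,
    commutator_correction]

end GeneralLinearMethod

/-- If rows 3..r of B·A coincide with rows 3..r of X·B and rows 3..r of
B·U coincide with rows 3..r of X·V − V·X, then for every ω with I − ωA invertible,
rows 3..r of (I − ωX)·M(ω) coincide with rows 3..r of V·(I − ωX), where
M(ω) = V + ω B (I − ωA)⁻¹ U. -/
theorem stmt_2 {r : ℕ} (hr : 2 ≤ r)
    (A U B V X : Matrix (Fin r) (Fin r) ℂ)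
    (hIQS1 : ∀ i j : Fin r, 2 ≤ (i : ℕ) → (B * A) i j = (X * B) i j)
    (hIQS2 : ∀ i j : Fin r, 2 ≤ (i : ℕ) → (B * U) i j = (X * V - V * X) i j)
    (ω : ℂ) (hA : IsUnit (1 - ω • A)) :
    ∀ i j : Fin r, 2 ≤ (i : ℕ) →
      ((1 - ω • X) * (V + ω • (B * (1 - ω • A)⁻¹ * U))) i j =
        (V * (1 - ω • X)) i j := by
  intro i j hi
  have row_BA := single_one_vecMul_eq_iff.mpr (hIQS1 i · hi)
  have row_BU := single_one_vecMul_eq_iff.mpr (hIQS2 i · hi)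
  exact single_one_vecMul_eq_iff.mp (stmt_2_general row_BA row_BU hA) j
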